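/- arXiv:2105.03286 — 8 statements merged into one kernel-verified Lean document; each statement's English description precedes it below -/
import Mathlib

section
/- Let (X,r) be a set-theoretic YBE solution and (F,Φ,Ψ) a Drinfeld twist on (X,r). Then the bijection F ∘ r ∘ F⁻¹ : X² → X² also satisfies the braid relation, i.e. (X, F∘r∘F⁻¹) is again a set-theoretic YBE solution. -/
namespace YBETwist

/-- Apply a map on `X × X` to the factors 1,2 of a triple: `f₁₂ = f × id`. -/
def E12 {X : Type*} (f : (X × X) ≃ (X × X)) : (X × X × X) ≃ (X × X × X) :=
  ((Equiv.prodAssoc X X X).symm.trans (f.prodCongr (Equiv.refl X))).trans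
    (Equiv.prodAssoc X X X)

/-- Apply a map on `X × X` to the factors 2,3 of a triple: `f₂₃ = id × f`. -/
def E23 {X : Type*} (f : (X × X) ≃ (X × X)) : (X × X × X) ≃ (X × X × X) :=
  (Equiv.refl X).prodCongr f

/-- The braid relation `r₂₃ ∘ r₁₂ ∘ r₂₃ = r₁₂ ∘ r₂₃ ∘ r₁₂`; a set-theoretic YBE solution is a
bijection `r : X² → X²` satisfying it. -/
def IsBraided {X : Type*} (r : (X × X) ≃ (X × X)) : Prop :=
  ∀ p : X × X × X, E23 r (E12 r (E23 r p)) = E12 r (E23 r (E12 r p))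

/-- A Drinfeld twist `(F, Φ, Ψ)` on a set-theoretic YBE solution `(X, r)`. -/
structure IsTwist {X : Type*} (r F : (X × X) ≃ (X × X))
    (Φ Ψ : (X × X × X) ≃ (X × X × X)) : Prop where
  t1 : ∀ p, E12 F (Ψ p) = E23 F (Φ p)
  t2 : ∀ p, Φ (E23 r p) = E23 r (Φ p)
  t3 : ∀ p, Ψ (E12 r p) = E12 r (Ψ p)

/-- The twisted map `F ∘ r ∘ F⁻¹`. -/
def twisted {X : Type*} (r F : (X × X) ≃ (X × X)) : (X × X) ≃ (X × X) :=
  (F.symm.trans r).trans F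

theorem E12_twisted_E12 {X : Type*} (r F : (X × X) ≃ (X × X)) (p : X × X × X) :
    E12 (twisted r F) (E12 F p) = E12 F (E12 r p) := by
  simp [E12, twisted]

theorem E23_twisted_E23 {X : Type*} (r F : (X × X) ≃ (X × X)) (p : X × X × X) :
    E23 (twisted r F) (E23 F p) = E23 F (E23 r p) := by
  simp [E23, twisted, Prod.map]

theorem twist_of_YBE_is_YBE {X : Type*} (r F : (X × X) ≃ (X × X))
    (Φ Ψ : (X × X × X) ≃ (X × X × X))
    (hr : IsBraided r) (ht : IsTwist r F Φ Ψ) :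
    IsBraided (twisted r F) := by
  have h12 (q) : E12 (twisted r F) (E12 F (Ψ q)) = E12 F (Ψ (E12 r q)) := by
    rw [E12_twisted_E12, ht.t3]
  have h23 (q) : E23 (twisted r F) (E12 F (Ψ q)) = E12 F (Ψ (E23 r q)) := by
    rw [ht.t1, E23_twisted_E23, ← ht.t2, ← ht.t1]
  intro p
  obtain ⟨q, rfl⟩ := (Ψ.trans (E12 F)).surjective p
  simp only [Equiv.trans_apply, h12, h23, hr q]

end YBETwist
end

section
/- Let X be a set and let r₁, r₂ be two involutive set-theoretic YBE solutions on X, both non-degenerate in the sense that in r_i(x,y) = (σ_x(y), γ_y(x)) all the maps σ_x and γ_y are bijections. Then there exists a Drinfeld twist (F,Φ,Ψ) on (X,r₁) such that r₂ = F∘r₁∘F⁻¹. -/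
namespace YBETwist

/-- A left non-degenerate involutive solution is conjugate to the flip on `X²`, by
`(x, y) ↦ (x, σ_x y)`, and on `X³`, by `(x, y, z) ↦ (x, σ_x y, σ_x (σ_y z))`. -/
lemma exists_conj_flip {X : Type*} (r : (X × X) ≃ (X × X)) (σ γ : X → X → X)
    (hr : ∀ x y, r (x, y) = (σ x y, γ y x)) (hb : IsBraided r)
    (hi : ∀ p : X × X, r (r p) = p) (hσ : ∀ x, Function.Bijective (σ x)) :
    ∃ (J : (X × X) ≃ (X × X)) (K : (X × X × X) ≃ (X × X × X)),
      (∀ p, J (r p) = (J p).swap) ∧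
      (∀ p, K (E12 r p) = E12 (Equiv.prodComm X X) (K p)) ∧
      (∀ p, K (E23 r p) = E23 (Equiv.prodComm X X) (K p)) := by
  let s : X → X ≃ X := fun x => Equiv.ofBijective (σ x) (hσ x)
  let J : (X × X) ≃ (X × X) := Equiv.prodShear (Equiv.refl X) s
  let K : (X × X × X) ≃ (X × X × X) :=
    Equiv.prodShear (Equiv.refl X) fun x => J.trans ((s x).prodCongr (s x))
  have hJ : ∀ x y, J (x, y) = (x, σ x y) := fun _ _ => rfl
  have hK : ∀ x y z, K (x, y, z) = (x, σ x y, σ x (σ y z)) := fun _ _ _ => rfl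
  have h12 : ∀ x y z, E12 r (x, y, z) = (σ x y, γ y x, z) := fun x y z => by
    simp [E12, hr]
  have h23 : ∀ x y z, E23 r (x, y, z) = (x, σ y z, γ z y) := fun x y z => by
    simp [E23, hr]
  have hinv : ∀ x y, σ (σ x y) (γ y x) = x := fun x y => by
    simpa [hr] using congrArg Prod.fst (hi (x, y))
  have hbraid : ∀ x y z, σ x (σ y z) = σ (σ x y) (σ (γ y x) z) := fun x y z => by
    simpa [h12, h23] using congrArg Prod.fst (hb (x, y, z))
  refine ⟨J, K, ?_, ?_, ?_⟩
  · rintro ⟨x, y⟩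
    simp [hr, hJ, hinv]
  · rintro ⟨x, y, z⟩
    simp [hr, hK, hinv, ← hbraid, E12]
  · rintro ⟨x, y, z⟩
    simp [hr, hK, hinv, E23]

/-- `E12` turns an intertwining relation on `X²` into one on `X³`. -/
lemma E12_intertwine {X : Type*} {F r s : (X × X) ≃ (X × X)} (h : ∀ p, F (r p) = s (F p))
    (p : X × X × X) : E12 F (E12 r p) = E12 s (E12 F p) := by
  simp [E12, h]

/-- `E23` turns an intertwining relation on `X²` into one on `X³`. -/
lemma E23_intertwine {X : Type*} {F r s : (X × X) ≃ (X × X)} (h : ∀ p, F (r p) = s (F p))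
    (p : X × X × X) : E23 F (E23 r p) = E23 s (E23 F p) := by
  simp [E23, Prod.map, h]

/-- If `F` intertwines `r` with `s` on `X²` and `G` does so on `X³`, then
`(F, F₂₃⁻¹ ∘ G, F₁₂⁻¹ ∘ G)` is a Drinfeld twist. -/
lemma isTwist_of_intertwine {X : Type*} {r s F : (X × X) ≃ (X × X)}
    {G : (X × X × X) ≃ (X × X × X)} (hF : ∀ p, F (r p) = s (F p))
    (h12 : ∀ p, G (E12 r p) = E12 s (G p)) (h23 : ∀ p, G (E23 r p) = E23 s (G p)) :
    IsTwist r F (G.trans (E23 F).symm) (G.trans (E12 F).symm) where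
  t1 p := by simp
  t2 p := by simp [Equiv.symm_apply_eq, E23_intertwine hF, h23]
  t3 p := by simp [Equiv.symm_apply_eq, E12_intertwine hF, h12]

theorem involutive_solutions_related_by_twist {X : Type*}
    (r₁ r₂ : (X × X) ≃ (X × X)) (σ₁ γ₁ σ₂ γ₂ : X → X → X)
    (hr₁ : ∀ x y, r₁ (x, y) = (σ₁ x y, γ₁ y x))
    (hr₂ : ∀ x y, r₂ (x, y) = (σ₂ x y, γ₂ y x))
    (hb₁ : IsBraided r₁) (hb₂ : IsBraided r₂)
    (hi₁ : ∀ p : X × X, r₁ (r₁ p) = p) (hi₂ : ∀ p : X × X, r₂ (r₂ p) = p)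
    (hσ₁ : ∀ x, Function.Bijective (σ₁ x)) (hγ₁ : ∀ y, Function.Bijective (γ₁ y))
    (hσ₂ : ∀ x, Function.Bijective (σ₂ x)) (hγ₂ : ∀ y, Function.Bijective (γ₂ y)) :
    ∃ (F : (X × X) ≃ (X × X)) (Φ Ψ : (X × X × X) ≃ (X × X × X)),
      IsTwist r₁ F Φ Ψ ∧ ∀ p : X × X, r₂ p = twisted r₁ F p := by
  obtain ⟨J₁, K₁, hJ₁, hK₁, hL₁⟩ := exists_conj_flip r₁ σ₁ γ₁ hr₁ hb₁ hi₁ hσ₁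
  obtain ⟨J₂, K₂, hJ₂, hK₂, hL₂⟩ := exists_conj_flip r₂ σ₂ γ₂ hr₂ hb₂ hi₂ hσ₂
  have hF : ∀ p, J₁.trans J₂.symm (r₁ p) = r₂ (J₁.trans J₂.symm p) := fun p => by
    simp [Equiv.symm_apply_eq, hJ₁, hJ₂]
  refine ⟨J₁.trans J₂.symm, _, _,
    isTwist_of_intertwine (s := r₂) (G := K₁.trans K₂.symm) hF ?_ ?_, fun p => ?_⟩
  · intro p
    simp [Equiv.symm_apply_eq, hK₁, hK₂]
  · intro p
    simp [Equiv.symm_apply_eq, hL₁, hL₂]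
  · have h := hF ((J₁.trans J₂.symm).symm p)
    rw [Equiv.apply_symm_apply] at h
    exact h.symm

end YBETwist
end

section
/- Let X be a set and σ, γ : X → X bijections with σ∘γ = γ∘σ and σ² = γ² = id_X, and define r(x,y) := (σ(y), γ(x)). Then (X,r) is a set-theoretic YBE solution; the maps F(x,y) := (σ(x), γ(y)), Φ(x,y,z) := (γ(σ(x)), σ(y), σ(z)), Ψ(x,y,z) := (γ(x), γ(y), γ(σ(z))) form a Drinfeld twist on (X,r); and the twisted solution is (F∘r∘F⁻¹)(x,y) = (γ(y), σ(x)). -/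
namespace YBETwist

theorem E12_apply {X : Type*} (f : (X × X) ≃ (X × X)) (x y z : X) :
    E12 f (x, y, z) = ((f (x, y)).1, (f (x, y)).2, z) := rfl

theorem E23_apply {X : Type*} (f : (X × X) ≃ (X × X)) (x y z : X) :
    E23 f (x, y, z) = (x, f (y, z)) := rfl

theorem twisted_apply {X : Type*} (r F : (X × X) ≃ (X × X)) (p : X × X) :
    twisted r F p = F (r (F.symm p)) := rfl

theorem commuting_involutions_twist {X : Type*} (σ γ : X → X)
    (hcomm : ∀ x, σ (γ x) = γ (σ x)) (hσ2 : ∀ x, σ (σ x) = x) (hγ2 : ∀ x, γ (γ x) = x)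
    (r F : (X × X) ≃ (X × X)) (Φ Ψ : (X × X × X) ≃ (X × X × X))
    (hr : ∀ x y, r (x, y) = (σ y, γ x))
    (hF : ∀ x y, F (x, y) = (σ x, γ y))
    (hΦ : ∀ x y z, Φ (x, y, z) = (γ (σ x), σ y, σ z))
    (hΨ : ∀ x y z, Ψ (x, y, z) = (γ x, γ y, γ (σ z))) :
    IsBraided r ∧ IsTwist r F Φ Ψ ∧
    ∀ x y, twisted r F (x, y) = (γ y, σ x) := by
  refine ⟨?_, ⟨?_, ?_, ?_⟩, ?_⟩
  · rintro ⟨x, y, z⟩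
    simp only [E12_apply, E23_apply, hr, hcomm]
  · rintro ⟨x, y, z⟩
    simp only [E12_apply, E23_apply, hF, hΦ, hΨ, hcomm, hσ2, hγ2]
  · rintro ⟨x, y, z⟩
    simp only [E23_apply, hr, hΦ, hcomm]
  · rintro ⟨x, y, z⟩
    simp only [E12_apply, hr, hΨ, hcomm]
  · intro x y
    have hsymm : F.symm (x, y) = (σ x, γ y) := by
      rw [Equiv.symm_apply_eq, hF, hσ2, hγ2]
    rw [twisted_apply, hsymm, hr, hF, hσ2, hγ2]

end YBETwist
end

section
/- Let (G,·,e) be a group with braiding operator r and let (F,Φ,Ψ) be a Drinfeld twist on (G,·,e,r). Then the operation m∘F⁻¹ (i.e. x ∗ y := m(F⁻¹(x,y)), where m is the multiplication of G) makes G into a group with identity element e, and F∘r∘F⁻¹ is a braiding operator on the group (G, m∘F⁻¹, e). -/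
namespace BraceTwist

/-- Apply a map on `G × G` to the factors 1,2 of a triple: `f₁₂ = f × id`. -/
def E12 {G : Type*} (f : (G × G) ≃ (G × G)) : (G × G × G) ≃ (G × G × G) :=
  ((Equiv.prodAssoc G G G).symm.trans (f.prodCongr (Equiv.refl G))).trans
    (Equiv.prodAssoc G G G)

/-- Apply a map on `G × G` to the factors 2,3 of a triple: `f₂₃ = id × f`. -/
def E23 {G : Type*} (f : (G × G) ≃ (G × G)) : (G × G × G) ≃ (G × G × G) :=
  (Equiv.refl G).prodCongr f

/-- `m₁₂ : G³ → G²`, multiplying the first two factors. -/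
def M12 {G : Type*} (mul : G → G → G) : G × G × G → G × G :=
  fun p => (mul p.1 p.2.1, p.2.2)

/-- `m₂₃ : G³ → G²`, multiplying the last two factors. -/
def M23 {G : Type*} (mul : G → G → G) : G × G × G → G × G :=
  fun p => (p.1, mul p.2.1 p.2.2)

/-- `(mul, e, inv)` is a group structure on `G`. -/
structure IsGroup {G : Type*} (mul : G → G → G) (e : G) (inv : G → G) : Prop where
  mul_assoc : ∀ a b c, mul (mul a b) c = mul a (mul b c)
  one_mul : ∀ a, mul e a = a
  mul_one : ∀ a, mul a e = a
  inv_mul : ∀ a, mul (inv a) a = e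
  mul_inv : ∀ a, mul a (inv a) = e

/-- `r` is a braiding operator on the group `(G, mul, e)`. -/
structure IsBraidingOp {G : Type*} (mul : G → G → G) (e : G)
    (r : (G × G) ≃ (G × G)) : Prop where
  unit_left : ∀ g, r (e, g) = (g, e)
  unit_right : ∀ g, r (g, e) = (e, g)
  br1 : ∀ p : G × G × G, r (M12 mul p) = M23 mul (E12 r (E23 r p))
  br2 : ∀ p : G × G × G, r (M23 mul p) = M12 mul (E23 r (E12 r p))
  mul_r : ∀ p : G × G, mul (r p).1 (r p).2 = mul p.1 p.2

/-- A Drinfeld twist `(F, Φ, Ψ)` on the group with braiding operator `(G, mul, e, r)`. -/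
structure IsGrpTwist {G : Type*} (mul : G → G → G) (e : G)
    (r F : (G × G) ≃ (G × G)) (Φ Ψ : (G × G × G) ≃ (G × G × G)) : Prop where
  t1 : ∀ p, E12 F (Ψ p) = E23 F (Φ p)
  t2 : ∀ p, Φ (E23 r p) = E23 r (Φ p)
  t3 : ∀ p, Ψ (E12 r p) = E12 r (Ψ p)
  g1a : ∀ x y, Ψ (x, y, e) = (x, y, e)
  g1b : ∀ x y, Φ (e, x, y) = (e, x, y)
  g2a : ∀ x, F (e, x) = (e, x)
  g2b : ∀ x, F (x, e) = (x, e)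
  g3 : ∀ p : G × G × G, M23 mul (Φ p) = F (M23 mul p)
  g4 : ∀ p : G × G × G, M12 mul (Ψ p) = F (M12 mul p)

/-- The twisted map `F ∘ r ∘ F⁻¹`. -/
def twisted {G : Type*} (r F : (G × G) ≃ (G × G)) : (G × G) ≃ (G × G) :=
  (F.symm.trans r).trans F

/-- The twisted multiplication `m ∘ F⁻¹`. -/
def twistMul {G : Type*} (mul : G → G → G) (F : (G × G) ≃ (G × G)) : G → G → G :=
  fun x y => mul (F.symm (x, y)).1 (F.symm (x, y)).2

section Twist

variable {G : Type*} {mul : G → G → G} {e : G} {r F : (G × G) ≃ (G × G)}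
  {Φ Ψ : (G × G × G) ≃ (G × G × G)}

theorem twistMul_apply (p : G × G) :
    twistMul mul F (F p).1 (F p).2 = mul p.1 p.2 := by
  simp [twistMul]

theorem M12_twistMul (p : G × G × G) :
    M12 (twistMul mul F) (E12 F p) = M12 mul p := by
  simp [M12, E12, twistMul]

theorem M23_twistMul (p : G × G × G) :
    M23 (twistMul mul F) (E23 F p) = M23 mul p := by
  simp [M23, E23, twistMul]

theorem twisted_apply (p : G × G) : twisted r F (F p) = F (r p) := by
  simp [twisted]

theorem E12_twisted (p : G × G × G) :
    E12 (twisted r F) (E12 F p) = E12 F (E12 r p) := by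
  simp [E12, twisted]

theorem E23_twisted (p : G × G × G) :
    E23 (twisted r F) (E23 F p) = E23 F (E23 r p) := by
  simp [E23, twisted, Prod.map]

/-- The bijection `F₁₂ ∘ Ψ = F₂₃ ∘ Φ` of `G³` attached to a twist. -/
def tripleTwist (F : (G × G) ≃ (G × G)) (Ψ : (G × G × G) ≃ (G × G × G)) :
    (G × G × G) ≃ (G × G × G) :=
  Ψ.trans (E12 F)

namespace IsGrpTwist

theorem tripleTwist_eq (ht : IsGrpTwist mul e r F Φ Ψ) (p : G × G × G) :
    tripleTwist F Ψ p = E23 F (Φ p) :=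
  ht.t1 p

theorem M12_tripleTwist (ht : IsGrpTwist mul e r F Φ Ψ) (p : G × G × G) :
    M12 (twistMul mul F) (tripleTwist F Ψ p) = F (M12 mul p) :=
  (M12_twistMul (Ψ p)).trans (ht.g4 p)

theorem M23_tripleTwist (ht : IsGrpTwist mul e r F Φ Ψ) (p : G × G × G) :
    M23 (twistMul mul F) (tripleTwist F Ψ p) = F (M23 mul p) := by
  rw [ht.tripleTwist_eq, M23_twistMul, ht.g3]

theorem E12_tripleTwist (ht : IsGrpTwist mul e r F Φ Ψ) (p : G × G × G) :
    E12 (twisted r F) (tripleTwist F Ψ p) = tripleTwist F Ψ (E12 r p) :=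
  (E12_twisted (Ψ p)).trans (congrArg (E12 F) (ht.t3 p).symm)

theorem E23_tripleTwist (ht : IsGrpTwist mul e r F Φ Ψ) (p : G × G × G) :
    E23 (twisted r F) (tripleTwist F Ψ p) = tripleTwist F Ψ (E23 r p) := by
  rw [ht.tripleTwist_eq, ht.tripleTwist_eq, E23_twisted, ht.t2]

theorem twistMul_one_left (ht : IsGrpTwist mul e r F Φ Ψ) (x : G) :
    twistMul mul F e x = mul e x := by
  simpa only [ht.g2a] using twistMul_apply (mul := mul) (F := F) (e, x)

theorem twistMul_one_right (ht : IsGrpTwist mul e r F Φ Ψ) (x : G) :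
    twistMul mul F x e = mul x e := by
  simpa only [ht.g2b] using twistMul_apply (mul := mul) (F := F) (x, e)

theorem twistMul_assoc (ht : IsGrpTwist mul e r F Φ Ψ)
    (hassoc : ∀ a b c, mul (mul a b) c = mul a (mul b c)) (a b c : G) :
    twistMul mul F (twistMul mul F a b) c = twistMul mul F a (twistMul mul F b c) := by
  obtain ⟨p, hp⟩ := (tripleTwist F Ψ).surjective (a, b, c)
  have h12 := ht.M12_tripleTwist p
  have h23 := ht.M23_tripleTwist p
  rw [hp] at h12 h23
  calc twistMul mul F (twistMul mul F a b) c
      = twistMul mul F (F (M12 mul p)).1 (F (M12 mul p)).2 := by rw [← h12]; rfl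
    _ = twistMul mul F (F (M23 mul p)).1 (F (M23 mul p)).2 := by
        rw [twistMul_apply, twistMul_apply]
        exact hassoc _ _ _
    _ = twistMul mul F a (twistMul mul F b c) := by rw [← h23]; rfl

/-- The middle entry of the image of `(a, a⁻¹, a)` under `F₁₂ ∘ Ψ` is a two-sided inverse
of `a` for the twisted multiplication. -/
theorem exists_twistMul_inv (ht : IsGrpTwist mul e r F Φ Ψ) {a a' : G}
    (hl : mul a' a = e) (hr : mul a a' = e) :
    ∃ b, twistMul mul F b a = e ∧ twistMul mul F a b = e := by
  have h12 := ht.M12_tripleTwist (a, a', a)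
  have h23 := ht.M23_tripleTwist (a, a', a)
  simp only [M12, M23, hl, hr, ht.g2a, ht.g2b, Prod.mk.injEq] at h12 h23
  obtain ⟨hab, hlast⟩ := h12
  obtain ⟨hfirst, hba⟩ := h23
  rw [hfirst] at hab
  rw [hlast] at hba
  exact ⟨_, hba, hab⟩

theorem isGroup_twistMul {inv : G → G} (ht : IsGrpTwist mul e r F Φ Ψ)
    (hG : IsGroup mul e inv) : ∃ inv' : G → G, IsGroup (twistMul mul F) e inv' := by
  choose inv' hl hr using fun a => ht.exists_twistMul_inv (hG.inv_mul a) (hG.mul_inv a)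
  exact ⟨inv', ht.twistMul_assoc hG.mul_assoc,
    fun a => (ht.twistMul_one_left a).trans (hG.one_mul a),
    fun a => (ht.twistMul_one_right a).trans (hG.mul_one a), hl, hr⟩

theorem isBraidingOp_twisted (ht : IsGrpTwist mul e r F Φ Ψ) (hr : IsBraidingOp mul e r) :
    IsBraidingOp (twistMul mul F) e (twisted r F) where
  unit_left g := by
    simpa only [ht.g2a, ht.g2b, hr.unit_left] using twisted_apply (r := r) (F := F) (e, g)
  unit_right g := by
    simpa only [ht.g2a, ht.g2b, hr.unit_right] using twisted_apply (r := r) (F := F) (g, e)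
  br1 q := by
    obtain ⟨p, rfl⟩ := (tripleTwist F Ψ).surjective q
    rw [ht.M12_tripleTwist, twisted_apply, hr.br1, ht.E23_tripleTwist, ht.E12_tripleTwist,
      ht.M23_tripleTwist]
  br2 q := by
    obtain ⟨p, rfl⟩ := (tripleTwist F Ψ).surjective q
    rw [ht.M23_tripleTwist, twisted_apply, hr.br2, ht.E12_tripleTwist, ht.E23_tripleTwist,
      ht.M12_tripleTwist]
  mul_r q := by
    obtain ⟨p, rfl⟩ := F.surjective q
    rw [twisted_apply, twistMul_apply, twistMul_apply, hr.mul_r]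

end IsGrpTwist

end Twist

theorem twisted_is_group_with_braiding {G : Type*} (mul : G → G → G) (e : G)
    (inv : G → G) (hG : IsGroup mul e inv)
    (r F : (G × G) ≃ (G × G)) (Φ Ψ : (G × G × G) ≃ (G × G × G))
    (hr : IsBraidingOp mul e r) (ht : IsGrpTwist mul e r F Φ Ψ) :
    (∃ inv' : G → G, IsGroup (twistMul mul F) e inv') ∧
    IsBraidingOp (twistMul mul F) e (twisted r F) := by
  exact ⟨ht.isGroup_twistMul hG, ht.isBraidingOp_twisted hr⟩

end BraceTwist
end

section
/- Let (G,·,e) be a group with braiding operator r, (F,Φ,Ψ) a Drinfeld twist on (G,·,e,r), and (𝐅,φ,ψ) a Drinfeld twist on the twisted group with braiding operator (G, m∘F⁻¹, e, F∘r∘F⁻¹). Then (𝐅∘F, F₂₃⁻¹∘φ∘F₂₃∘Φ, F₁₂⁻¹∘ψ∘F₁₂∘Ψ) is a Drinfeld twist on (G,·,e,r). -/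
namespace BraceTwist

@[simp]
theorem E12_trans {G : Type*} (f g : (G × G) ≃ (G × G)) (p : G × G × G) :
    E12 (f.trans g) p = E12 g (E12 f p) := rfl

@[simp]
theorem E23_trans {G : Type*} (f g : (G × G) ≃ (G × G)) (p : G × G × G) :
    E23 (f.trans g) p = E23 g (E23 f p) := rfl

theorem E12_symm {G : Type*} (f : (G × G) ≃ (G × G)) : E12 f.symm = (E12 f).symm := rfl

theorem E23_symm {G : Type*} (f : (G × G) ≃ (G × G)) : E23 f.symm = (E23 f).symm := rfl

theorem E12_twisted_apply {G : Type*} (r F : (G × G) ≃ (G × G)) (p : G × G × G) :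
    E12 (twisted r F) (E12 F p) = E12 F (E12 r p) := by
  simp [twisted, E12_symm]

theorem E23_twisted_apply {G : Type*} (r F : (G × G) ≃ (G × G)) (p : G × G × G) :
    E23 (twisted r F) (E23 F p) = E23 F (E23 r p) := by
  simp [twisted, E23_symm]

theorem M12_twistMul_E12 {G : Type*} (mul : G → G → G) (F : (G × G) ≃ (G × G))
    (p : G × G × G) : M12 (twistMul mul F) (E12 F p) = M12 mul p := by
  simp [M12, twistMul, E12]

theorem M23_twistMul_E23 {G : Type*} (mul : G → G → G) (F : (G × G) ≃ (G × G))
    (p : G × G × G) : M23 (twistMul mul F) (E23 F p) = M23 mul p := by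
  simp [M23, twistMul, E23]

theorem comp_of_grp_twists_is_twist {G : Type*} (mul : G → G → G) (e : G)
    (inv : G → G) (hG : IsGroup mul e inv)
    (r F F' : (G × G) ≃ (G × G)) (Φ Ψ φ ψ : (G × G × G) ≃ (G × G × G))
    (hr : IsBraidingOp mul e r) (ht : IsGrpTwist mul e r F Φ Ψ)
    (ht' : IsGrpTwist (twistMul mul F) e (twisted r F) F' φ ψ) :
    IsGrpTwist mul e r (F.trans F')
      (((Φ.trans (E23 F)).trans φ).trans (E23 F).symm)
      (((Ψ.trans (E12 F)).trans ψ).trans (E12 F).symm) := by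
  constructor
  · intro p
    simp [ht'.t1, ht.t1]
  · intro p
    apply (E23 F).injective
    simp only [Equiv.trans_apply, Equiv.apply_symm_apply, ht.t2]
    rw [← E23_twisted_apply, ht'.t2, ← E23_twisted_apply, Equiv.apply_symm_apply]
  · intro p
    apply (E12 F).injective
    simp only [Equiv.trans_apply, Equiv.apply_symm_apply, ht.t3]
    rw [← E12_twisted_apply, ht'.t3, ← E12_twisted_apply, Equiv.apply_symm_apply]
  · intro x y
    apply (E12 F).injective
    simp only [Equiv.trans_apply, Equiv.apply_symm_apply, ht.g1a]
    exact ht'.g1a (F (x, y)).1 (F (x, y)).2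
  · intro x y
    apply (E23 F).injective
    simp only [Equiv.trans_apply, Equiv.apply_symm_apply, ht.g1b]
    exact ht'.g1b (F (x, y)).1 (F (x, y)).2
  · intro x
    simp [ht.g2a, ht'.g2a]
  · intro x
    simp [ht.g2b, ht'.g2b]
  · intro p
    rw [← M23_twistMul_E23 mul F]
    simp [ht'.g3, M23_twistMul_E23, ht.g3]
  · intro p
    rw [← M12_twistMul_E12 mul F]
    simp [ht'.g4, M12_twistMul_E12, ht.g4]

end BraceTwist
end

section
/- Let (G,·,e) be a group with braiding operator r, written r(x,y) = (σ_x(y), γ_y(x)), and suppose each σ_x is bijective. Define F(x,y) := (x, σ_x(y)), Φ(x,y,z) := (x, σ_x(y), σ_{γ_y(x)}(z)), Ψ(x,y,z) := (x, y, σ_x(σ_y(z))). Then (F,Φ,Ψ) is a Drinfeld twist on (G,·,e,r); the twisted multiplication m∘F⁻¹ is exactly the additive group operation, (m∘F⁻¹)(x,y) = x ⋆ y := x·σ_x⁻¹(y); the twisted braiding operator is (F∘r∘F⁻¹)(x,y) = (y, σ_y(γ_{σ_x⁻¹(y)}(x))); and it satisfies y ⋆ σ_y(γ_{σ_x⁻¹(y)}(x))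 = x ⋆ y for all x,y (i.e. the twisted braiding is the conjugation braiding of (G,⋆)). -/
namespace BraceTwist

/-- The two hexagon identities and the compatibility with the multiplication, written in terms of
the components `σ` and `γ` of a braiding operator. -/
theorem IsBraidingOp.components {G : Type*} {mul : G → G → G} {e : G}
    {r : (G × G) ≃ (G × G)} {σ γ : G → G → G} (hbr : IsBraidingOp mul e r)
    (hr : ∀ x y, r (x, y) = (σ x y, γ y x)) :
    (∀ x, σ e x = x) ∧ (∀ x, σ x e = e) ∧ (∀ x, γ x e = e) ∧
    (∀ x y z, σ (mul x y) z = σ x (σ y z)) ∧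
    (∀ x y z, σ x (mul y z) = mul (σ x y) (σ (γ y x) z)) ∧
    (∀ x y, mul (σ x y) (γ y x) = mul x y) := by
  refine ⟨fun x => ?_, fun x => ?_, fun x => ?_, fun x y z => ?_, fun x y z => ?_, fun x y => ?_⟩
  · simpa [hr] using congrArg Prod.fst (hbr.unit_left x)
  · simpa [hr] using congrArg Prod.fst (hbr.unit_right x)
  · simpa [hr] using congrArg Prod.snd (hbr.unit_left x)
  · simpa [hr, M12, M23, E12, E23] using congrArg Prod.fst (hbr.br1 (x, y, z))
  · simpa [hr, M12, M23, E12, E23] using congrArg Prod.fst (hbr.br2 (x, y, z))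
  · simpa [hr] using hbr.mul_r (x, y)

/-- Left cancellation in a group. -/
theorem IsGroup.mul_left_cancel {G : Type*} {mul : G → G → G} {e : G} {inv : G → G}
    (hG : IsGroup mul e inv) {a b c : G} (h : mul a b = mul a c) : b = c := by
  rw [← hG.one_mul b, ← hG.inv_mul a, hG.mul_assoc, h, ← hG.mul_assoc, hG.inv_mul, hG.one_mul]

theorem theta_twist_to_trivial_brace {G : Type*} (mul : G → G → G) (e : G)
    (inv : G → G) (hG : IsGroup mul e inv)
    (r F : (G × G) ≃ (G × G)) (Φ Ψ : (G × G × G) ≃ (G × G × G))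
    (σ γ τ : G → G → G)
    (hbr : IsBraidingOp mul e r)
    (hr : ∀ x y, r (x, y) = (σ x y, γ y x))
    (hτ : ∀ x, Function.LeftInverse (τ x) (σ x) ∧ Function.RightInverse (τ x) (σ x))
    (hF : ∀ x y, F (x, y) = (x, σ x y))
    (hΦ : ∀ x y z, Φ (x, y, z) = (x, σ x y, σ (γ y x) z))
    (hΨ : ∀ x y z, Ψ (x, y, z) = (x, y, σ x (σ y z))) :
    IsGrpTwist mul e r F Φ Ψ ∧
    (∀ x y, twistMul mul F x y = mul x (τ x y)) ∧
    (∀ x y, twisted r F (x, y) = (y, σ y (γ (τ x y) x))) ∧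
    (∀ x y, mul y (τ y (σ y (γ (τ x y) x))) = mul x (τ x y)) := by
  obtain ⟨σ_one, σ_unit, γ_unit, σ_mul, σ_dist, mul_eq⟩ := hbr.components hr
  have σ_comm : ∀ x y z, σ (σ x y) (σ (γ y x) z) = σ x (σ y z) := fun x y z => by
    rw [← σ_mul, mul_eq, σ_mul]
  have hFs : ∀ x y, F.symm (x, y) = (x, τ x y) := fun x y => by
    rw [Equiv.symm_apply_eq, hF, (hτ x).2 y]
  have mul_eq_tau : ∀ x y, mul y (γ (τ x y) x) = mul x (τ x y) := fun x y => by
    simpa only [(hτ x).2 y] using mul_eq x (τ x y)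
  refine ⟨⟨?_, ?_, ?_, ?_, ?_, ?_, ?_, ?_, ?_⟩, ?_, ?_, ?_⟩
  · rintro ⟨x, y, z⟩
    simp [E12, E23, hF, hΦ, hΨ, σ_comm]
  · rintro ⟨x, y, z⟩
    have key : σ (γ (σ y z) x) (γ z y) = γ (σ (γ y x) z) (σ x y) := by
      apply hG.mul_left_cancel (a := σ x (σ y z))
      rw [← σ_dist, mul_eq, σ_dist, ← mul_eq (σ x y), σ_comm]
    simp [E23, hr, hΦ, σ_comm, key]
  · rintro ⟨x, y, z⟩
    simp [E12, hr, hΨ, σ_comm]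
  · simp [hΨ, σ_unit]
  · intro x y
    simp [hΦ, σ_one, γ_unit]
  · simp [hF, σ_one]
  · simp [hF, σ_unit]
  · rintro ⟨x, y, z⟩
    simp [M23, hF, hΦ, σ_dist]
  · rintro ⟨x, y, z⟩
    simp [M12, hF, hΨ, σ_mul]
  · simp [twistMul, hFs]
  · intro x y
    simp [twisted, hFs, hr, hF, (hτ x).2 y]
  · intro x y
    rw [(hτ y).1, mul_eq_tau]

end BraceTwist
end

section
/- Let G be a set carrying two group structures (G,·,e) and (G,⋆,e) with the same identity element e. Let r(x,y) := (y, y⁻¹·x·y) be the conjugation braiding operator of (G,·) and r'(x,y) := (y, y^{-⋆}⋆x⋆y) that of (G,⋆), where y^{-⋆} denotes the ⋆-inverse of y. Suppose (F,Φ,Ψ) is a Drinfeld twist on the group with braiding operator (G,·,e,r) such that m∘F⁻¹ = ⋆ (where m is the ·-multiplication) and F∘r∘F⁻¹ = r'. For p,x ∈ G define f_p(x) := the first component of F(x, x⁻¹·p). Then: F(x,y) = (f_{x·y}(x), f_{x·y}(y)) for all x,y ∈ G; f_p(p) = p for all p; f_{x·y}(x) ⋆ f_{x·y}(y) = x·y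 for all x,y; and each f_p is a group isomorphism from (G,·) to (G,⋆), i.e. a bijection of G with f_p(x·y) = f_p(x) ⋆ f_p(y) for all x,y. In particular (G,·) and (G,⋆) are isomorphic groups. -/
namespace BraceTwist

section

variable {G : Type*} {mul smul : G → G → G} {e : G} {inv sinv : G → G}
  {r r' F : (G × G) ≃ (G × G)} {Φ Ψ : (G × G × G) ≃ (G × G × G)}

theorem IsGroup.mul_inv_cancel_left (h : IsGroup mul e inv) (a b : G) :
    mul a (mul (inv a) b) = b := by
  rw [← h.mul_assoc, h.mul_inv, h.one_mul]

theorem IsGroup.inv_mul_cancel_left (h : IsGroup mul e inv) (a b : G) :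
    mul (inv a) (mul a b) = b := by
  rw [← h.mul_assoc, h.inv_mul, h.one_mul]

theorem smul_of_twistMul (hmul : ∀ x y, twistMul mul F x y = smul x y) (p : G × G) :
    smul (F p).1 (F p).2 = mul p.1 p.2 := by
  rw [← hmul]
  simp [twistMul]

theorem twist_intertwines (htw : ∀ p, twisted r F p = r' p) (p : G × G) :
    F (r p) = r' (F p) := by
  rw [← htw]
  simp [twisted]

/-- For conjugation braidings, both components of `F` are values of one family of maps, indexed
by the product of the arguments. -/
theorem twist_apply_eq (hG : IsGroup mul e inv)
    (hr : ∀ x y, r (x, y) = (y, mul (mul (inv y) x) y))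
    (hr' : ∀ x y, r' (x, y) = (y, smul (smul (sinv y) x) y))
    (htw : ∀ p, twisted r F p = r' p) (x y : G) :
    F (x, y) = ((F (x, mul (inv x) (mul x y))).1, (F (y, mul (inv y) (mul x y))).1) := by
  have h := congrArg Prod.fst (twist_intertwines htw (x, y))
  rw [hr, hr' (F (x, y)).1 (F (x, y)).2, hG.mul_assoc] at h
  rw [h, hG.inv_mul_cancel_left]

/-- The composite `F₂₃ ∘ Φ` intertwines the two braidings acting on the last two factors. -/
theorem E23_twist_intertwines (ht : IsGrpTwist mul e r F Φ Ψ)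
    (htw : ∀ p, twisted r F p = r' p) (p : G × G × G) :
    E23 F (Φ (E23 r p)) = E23 r' (E23 F (Φ p)) := by
  rw [ht.t2]
  exact Prod.ext rfl (twist_intertwines htw _)

/-- The first component of `F₂₃ ∘ Φ`. -/
theorem E23_twist_fst (ht : IsGrpTwist mul e r F Φ Ψ) (x y z : G) :
    (E23 F (Φ (x, y, z))).1 = (F (x, mul y z)).1 :=
  congrArg Prod.fst (ht.g3 (x, y, z))

/-- The third component of `F₁₂ ∘ Ψ = F₂₃ ∘ Φ`. -/
theorem E23_twist_thd (ht : IsGrpTwist mul e r F Φ Ψ) (x y z : G) :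
    (E23 F (Φ (x, y, z))).2.2 = (F (mul x y, z)).2 := by
  rw [← ht.t1]
  change (M12 mul (Ψ (x, y, z))).2 = _
  rw [ht.g4]
  rfl

/-- The product of the first two components of `F₁₂ ∘ Ψ = F₂₃ ∘ Φ`. -/
theorem E23_twist_smul (ht : IsGrpTwist mul e r F Φ Ψ)
    (hmul : ∀ x y, twistMul mul F x y = smul x y) (x y z : G) :
    smul (E23 F (Φ (x, y, z))).1 (E23 F (Φ (x, y, z))).2.1 = (F (mul x y, z)).1 := by
  rw [← ht.t1]
  exact (smul_of_twistMul hmul ((Ψ (x, y, z)).1, (Ψ (x, y, z)).2.1)).trans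
    (congrArg Prod.fst (ht.g4 (x, y, z)))

/-- The second component of `F₂₃ ∘ Φ` when both braidings are conjugation braidings. -/
theorem E23_twist_snd (hG : IsGroup mul e inv)
    (hr : ∀ x y, r (x, y) = (y, mul (mul (inv y) x) y))
    (hr' : ∀ x y, r' (x, y) = (y, smul (smul (sinv y) x) y))
    (ht : IsGrpTwist mul e r F Φ Ψ) (htw : ∀ p, twisted r F p = r' p) (x y z : G) :
    (E23 F (Φ (x, y, z))).2.1 = (F (y, mul (inv y) (mul x (mul y z)))).1 := by
  have hconj : E23 r (x, mul (mul y z) (inv y), y) = (x, y, z) := by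
    change (x, r (mul (mul y z) (inv y), y)) = _
    rw [hr, hG.mul_assoc, hG.mul_assoc _ (inv y), hG.inv_mul, hG.mul_one,
      hG.inv_mul_cancel_left]
  have h := E23_twist_intertwines ht htw (x, mul (mul y z) (inv y), y)
  rw [hconj] at h
  have hfst : ∀ p : G × G, (r' p).1 = p.2 := fun p => by rw [← Prod.mk.eta (p := p), hr']
  rw [h]
  refine (hfst _).trans ((E23_twist_thd ht _ _ _).trans ?_)
  rw [twist_apply_eq hG hr hr' htw, hG.mul_assoc x, hG.mul_assoc (mul y z), hG.inv_mul,
    hG.mul_one]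

end

theorem twist_between_trivial_braces_gives_isos {G : Type*}
    (mul smul : G → G → G) (e : G) (inv sinv : G → G)
    (hG : IsGroup mul e inv) (hS : IsGroup smul e sinv)
    (r r' F : (G × G) ≃ (G × G)) (Φ Ψ : (G × G × G) ≃ (G × G × G))
    (hr : ∀ x y, r (x, y) = (y, mul (mul (inv y) x) y))
    (hr' : ∀ x y, r' (x, y) = (y, smul (smul (sinv y) x) y))
    (ht : IsGrpTwist mul e r F Φ Ψ)
    (hmul : ∀ x y, twistMul mul F x y = smul x y)
    (htw : ∀ p : G × G, twisted r F p = r' p)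
    (f : G → G → G)
    (hf : ∀ p x, f p x = (F (x, mul (inv x) p)).1) :
    (∀ x y, F (x, y) = (f (mul x y) x, f (mul x y) y)) ∧
    (∀ p, f p p = p) ∧
    (∀ x y, smul (f (mul x y) x) (f (mul x y) y) = mul x y) ∧
    (∀ p, Function.Bijective (f p)) ∧
    (∀ p x y, f p (mul x y) = smul (f p x) (f p y)) := by
  have hF : ∀ x y, F (x, y) = (f (mul x y) x, f (mul x y) y) := fun x y => by
    rw [hf, hf]
    exact twist_apply_eq hG hr hr' htw x y
  have hprod : ∀ x y, smul (f (mul x y) x) (f (mul x y) y) = mul x y := fun x y => by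
    simpa only [hF] using smul_of_twistMul hmul (x, y)
  refine ⟨hF, fun p => by rw [hf, hG.inv_mul, ht.g2b], hprod, fun p => ⟨?_, ?_⟩, ?_⟩
  · have key : ∀ x, F (x, mul (inv x) p) = (f p x, smul (sinv (f p x)) p) := fun x => by
      have h := hprod x (mul (inv x) p)
      rw [hF]
      rw [hG.mul_inv_cancel_left] at h ⊢
      have h := congrArg (smul (sinv (f p x))) h
      rw [hS.inv_mul_cancel_left] at h
      rw [h]
    intro x y hxy
    exact congrArg Prod.fst (F.injective ((key x).trans (hxy ▸ (key y).symm)))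
  · intro a
    obtain ⟨⟨x, y⟩, hxy⟩ := F.surjective (a, smul (sinv a) p)
    have h := smul_of_twistMul hmul (x, y)
    rw [hxy, hS.mul_inv_cancel_left] at h
    exact ⟨x, by rw [hf, h, hG.inv_mul_cancel_left, hxy]⟩
  · intro p x y
    have h := E23_twist_smul ht hmul x y (mul (inv (mul x y)) p)
    have hp : mul x (mul y (mul (inv (mul x y)) p)) = p := by
      rw [← hG.mul_assoc, hG.mul_inv_cancel_left]
    rw [E23_twist_fst ht, E23_twist_snd hG hr hr' ht htw, hp, ← hf p y, ← hf p (mul x y), hF,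
      hp] at h
    exact h.symm

end BraceTwist
end

section
/- Let G be a set carrying two group structures (G,·,e) and (G,⋆,e) with the same identity element e, and let {f_x : G → G}_{x∈G} be a family of bijections such that each f_x is a group isomorphism from (G,·) to (G,⋆) (f_x(a·b) = f_x(a) ⋆ f_x(b)) and f_x(x) = x for all x ∈ G. Define F(x,y) := (f_{x·y}(x), f_{x·y}(y)); α_{x,c} := f_{f_{x·c}(c)}⁻¹ ∘ f_{x·c}; Φ(x,y,z) := (f_{x·y·z}(x), α_{x,y·z}(y), α_{x,y·z}(z)); β_{c,z} := f_{f_{c·z}(c)}⁻¹ ∘ f_{c·z}; Ψ(x,y,z) := (β_{x·y,z}(x), β_{x·y,z}(y), f_{x·y·z}(z)). Then (F,Φ,Ψ) is a Drinfeld twist on the group (G,·,e) equipped with the conjugation braiding operator r(x,y) = (y, y⁻¹·x·y), and the twisted multiplication satisfies m∘F⁻¹ = ⋆. -/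
namespace BraceTwist

theorem IsGroup.eq_inv_of_mul_eq {G : Type*} {mul : G → G → G} {e : G} {inv : G → G}
    (hG : IsGroup mul e inv) {a b : G} (h : mul a b = e) : a = inv b := by
  rw [← hG.mul_one a, ← hG.mul_inv b, ← hG.mul_assoc, h, hG.one_mul]

theorem IsGroup.map_one {G : Type*} {mul smul : G → G → G} {e : G} {inv sinv : G → G}
    (hG : IsGroup mul e inv) (hS : IsGroup smul e sinv) {φ : G → G}
    (hφ : ∀ a b, φ (mul a b) = smul (φ a) (φ b)) : φ e = e := by
  have h : smul (φ e) (φ e) = φ e := by rw [← hφ, hG.one_mul]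
  calc φ e = smul (smul (sinv (φ e)) (φ e)) (φ e) := by rw [hS.inv_mul, hS.one_mul]
    _ = e := by rw [hS.mul_assoc, h, hS.inv_mul]

theorem IsGroup.map_inv {G : Type*} {mul smul : G → G → G} {e : G} {inv sinv : G → G}
    (hG : IsGroup mul e inv) (hS : IsGroup smul e sinv) {φ : G → G}
    (hφ : ∀ a b, φ (mul a b) = smul (φ a) (φ b)) (a : G) : φ (inv a) = sinv (φ a) :=
  hS.eq_inv_of_mul_eq (by rw [← hφ, hG.inv_mul, hG.map_one hS hφ])

/-- Conjugating `x` by `y` and swapping does not change the product. -/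
theorem IsGroup.mul_conj {G : Type*} {mul : G → G → G} {e : G} {inv : G → G}
    (hG : IsGroup mul e inv) (x y : G) : mul y (mul (mul (inv y) x) y) = mul x y := by
  rw [← hG.mul_assoc, ← hG.mul_assoc, hG.mul_inv, hG.one_mul]

@[simp]
theorem E12_apply {G : Type*} (f : (G × G) ≃ (G × G)) (x y z : G) :
    E12 f (x, y, z) = ((f (x, y)).1, (f (x, y)).2, z) := rfl

@[simp]
theorem E23_apply {G : Type*} (f : (G × G) ≃ (G × G)) (x y z : G) :
    E23 f (x, y, z) = (x, f (y, z)) := rfl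

theorem family_of_isos_gives_twist {G : Type*}
    (mul smul : G → G → G) (e : G) (inv sinv : G → G)
    (hG : IsGroup mul e inv) (hS : IsGroup smul e sinv)
    (f g : G → G → G)
    (hfg : ∀ x, Function.LeftInverse (g x) (f x) ∧ Function.RightInverse (g x) (f x))
    (hfhom : ∀ x a b, f x (mul a b) = smul (f x a) (f x b))
    (hffix : ∀ x, f x x = x)
    (r F : (G × G) ≃ (G × G)) (Φ Ψ : (G × G × G) ≃ (G × G × G))
    (hr : ∀ x y, r (x, y) = (y, mul (mul (inv y) x) y))
    (hF : ∀ x y, F (x, y) = (f (mul x y) x, f (mul x y) y))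
    (hΦ : ∀ x y z, Φ (x, y, z) =
      (f (mul x (mul y z)) x,
       g (f (mul x (mul y z)) (mul y z)) (f (mul x (mul y z)) y),
       g (f (mul x (mul y z)) (mul y z)) (f (mul x (mul y z)) z)))
    (hΨ : ∀ x y z, Ψ (x, y, z) =
      (g (f (mul (mul x y) z) (mul x y)) (f (mul (mul x y) z) x),
       g (f (mul (mul x y) z) (mul x y)) (f (mul (mul x y) z) y),
       f (mul x (mul y z)) z)) :
    IsGrpTwist mul e r F Φ Ψ ∧
    ∀ x y, twistMul mul F x y = smul x y := by
  have hgf (x a : G) : g x (f x a) = a := (hfg x).1 a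
  have hfg' (x a : G) : f x (g x a) = a := (hfg x).2 a
  have hgfix (x : G) : g x x = x := by simpa only [hffix] using hgf x x
  have hghom (x a b : G) : g x (smul a b) = mul (g x a) (g x b) := by
    rw [← hgf x (mul (g x a) (g x b)), hfhom, hfg', hfg']
  have hαhom (s t a b : G) : g t (f s (mul a b)) = mul (g t (f s a)) (g t (f s b)) := by
    rw [hfhom, hghom]
  have hαinv (s t a : G) : g t (f s (inv a)) = inv (g t (f s a)) :=
    hG.map_inv hG (φ := fun a => g t (f s a)) (hαhom s t) a
  have hα (s a b : G) :
      mul (g (f s (mul a b)) (f s a)) (g (f s (mul a b)) (f s b)) = f s (mul a b) := by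
    rw [← hαhom, hgfix]
  have hfe (x : G) : f x e = e := hG.map_one hS (hfhom x)
  refine ⟨⟨?_, ?_, ?_, ?_, ?_, ?_, ?_, ?_, ?_⟩, ?_⟩
  · rintro ⟨x, y, z⟩
    simp only [hΦ, hΨ, E12_apply, E23_apply, hF, hα, hfg', hG.mul_assoc]
  · rintro ⟨x, y, z⟩
    simp only [hΦ, E23_apply, hr, hG.mul_conj]
    simp only [hαhom _ _ (mul (inv z) y) z, hαhom _ _ (inv z) y, hαinv]
  · rintro ⟨x, y, z⟩
    simp only [hΨ, E12_apply, hr, ← hG.mul_assoc _ _ z, hG.mul_conj]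
    simp only [hαhom _ _ (mul (inv y) x) y, hαhom _ _ (inv y) x, hαinv]
  · intro x y
    simp only [hΨ, hG.mul_one, hffix, hgf, hfe]
  · intro x y
    simp only [hΦ, hG.one_mul, hffix, hgf, hfe]
  · intro x
    simp only [hF, hG.one_mul, hffix, hfe]
  · intro x
    simp only [hF, hG.mul_one, hffix, hfe]
  · rintro ⟨x, y, z⟩
    simp only [M23, hΦ, hF, hα]
  · rintro ⟨x, y, z⟩
    simp only [M12, hΨ, hF, hα, hG.mul_assoc]
  · intro x y
    obtain ⟨⟨a, b⟩, hab⟩ := F.surjective (x, y)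
    rw [twistMul, ← hab, F.symm_apply_apply]
    rw [hF, Prod.mk.injEq] at hab
    rw [← hab.1, ← hab.2, ← hfhom, hffix]

end BraceTwist
end
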